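/- arXiv:math/0012215 — 6 statements merged into one kernel-verified Lean document; each statement's English description precedes it below -/
import Mathlib

section
/- For every natural number n ≥ 1, the polynomial φ_n(t) = ∏_{k=1}^{n-1}(1 + k·t²) − ∏_{k=1}^{n}(1 + t² + t⁴ + ⋯ + t^{2(k-1)}) is divisible by 1 − t⁴ in the polynomial ring ℤ[t]. -/
open Polynomial Finset

lemma aux_sum (n : ℕ) : (1 - X ^ 2 : Polynomial ℤ) ∣
    (1 + (n : Polynomial ℤ) * X ^ 2) - ∑ j ∈ Finset.range (n + 1), (X : Polynomial ℤ) ^ (2 * j) := by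
  induction n with
  | zero => simp
  | succ n ih =>
    rw [Finset.sum_range_succ]
    have h : (1 - X ^ 2 : Polynomial ℤ) ∣ 1 - (X ^ 2) ^ n := one_sub_dvd_one_sub_pow _ n
    have h2 := dvd_add ih (h.mul_left (X ^ 2))
    convert h2 using 1
    push_cast
    ring

/-- For every `n ≥ 1`, the difference
`φ_n(t) = ∏_{k=1}^{n-1} (1 + k t²) - ∏_{k=1}^{n} (1 + t² + ⋯ + t^{2(k-1)})`
of the Poincaré polynomials of the configuration space `C_n(ℝ³)` and the flag
manifold `U(n)/Tⁿ` is divisible by `1 - t⁴` in `ℤ[t]`. -/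
theorem phi_divisible_by_one_sub_t4 (n : ℕ) (hn : 1 ≤ n) :
    (1 - X ^ 4 : Polynomial ℤ) ∣
      ((∏ k ∈ Finset.Icc 1 (n - 1), (1 + (k : Polynomial ℤ) * X ^ 2)) -
        ∏ k ∈ Finset.Icc 1 n, (∑ j ∈ Finset.range k, (X : Polynomial ℤ) ^ (2 * j))) := by
  induction n, hn using Nat.le_induction with
  | base => simp
  | succ n hn ih =>
    have key : (1 - X ^ 4 : Polynomial ℤ) ∣
        (∏ k ∈ Finset.Icc 1 n, (∑ j ∈ Finset.range k, (X : Polynomial ℤ) ^ (2 * j))) *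
        ((1 + (n : Polynomial ℤ) * X ^ 2) -
          ∑ j ∈ Finset.range (n + 1), (X : Polynomial ℤ) ^ (2 * j)) := by
      rcases hn.eq_or_lt with rfl | h2
      · simp [Finset.sum_range_succ]
      · have hq : (1 + X ^ 2 : Polynomial ℤ) ∣
            ∏ k ∈ Finset.Icc 1 n, (∑ j ∈ Finset.range k, (X : Polynomial ℤ) ^ (2 * j)) := by
          have := Finset.dvd_prod_of_mem
            (fun k : ℕ => ∑ j ∈ Finset.range k, (X : Polynomial ℤ) ^ (2 * j))
            (Finset.mem_Icc.mpr ⟨one_le_two, h2⟩ : 2 ∈ Finset.Icc 1 n)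
          simpa [Finset.sum_range_succ] using this
        have := mul_dvd_mul hq (aux_sum n)
        convert this using 1
        ring
    obtain ⟨m, rfl⟩ : ∃ m, n = m + 1 := ⟨n - 1, by omega⟩
    rw [Finset.prod_Icc_succ_top (by omega : 1 ≤ m + 1 + 1)]
    simp only [Nat.add_sub_cancel] at ih ⊢
    rw [Finset.prod_Icc_succ_top (by omega : 1 ≤ m + 1)
      (fun k : ℕ => (1 + (k : Polynomial ℤ) * X ^ 2))]
    have := dvd_add (ih.mul_right (1 + ((m + 1 : ℕ) : Polynomial ℤ) * X ^ 2)) key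
    convert this using 1
    ring
end

section
/- For every natural number n ≥ 1, there exists a polynomial ψ_n(t) ∈ ℤ[t], all of whose coefficients are non-negative, such that φ_n(t) = (1 − t⁴)·ψ_n(t) in ℤ[t]. -/
open Polynomial Finset

theorem aux_R {A : Type*} [CommRing A] (S : Subsemiring A) (y : A) (hy : y ∈ S) (n : ℕ) :
    ∃ R ∈ S, 1 + (n : A) * y - ∑ j ∈ Finset.range (n + 1), y ^ j = (1 - y) * R := by
  induction n with
  | zero => exact ⟨0, S.zero_mem, by simp⟩
  | succ n ih =>
    obtain ⟨R, hR, h⟩ := ih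
    refine ⟨R + y * ∑ j ∈ Finset.range n, y ^ j,
      S.add_mem hR (S.mul_mem hy (S.sum_mem fun j _ => S.pow_mem hy j)), ?_⟩
    have hg := mul_neg_geom_sum y n
    rw [Finset.sum_range_succ]
    push_cast
    linear_combination h - y * hg

theorem aux_Q {A : Type*} [CommRing A] (S : Subsemiring A) (y : A) (hy : y ∈ S) (n : ℕ)
    (hn : 2 ≤ n) :
    ∃ R ∈ S, ∏ k ∈ Finset.Icc 1 n, (∑ j ∈ Finset.range k, y ^ j) = (1 + y) * R := by
  induction n, hn using Nat.le_induction with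
  | base => exact ⟨1, S.one_mem, by
      rw [Finset.prod_Icc_succ_top (by norm_num)]; simp [Finset.sum_range_succ]⟩
  | succ n hn ih =>
    obtain ⟨R, hR, h⟩ := ih
    refine ⟨R * ∑ j ∈ Finset.range (n + 1), y ^ j,
      S.mul_mem hR (S.sum_mem fun j _ => S.pow_mem hy j), ?_⟩
    rw [Finset.prod_Icc_succ_top (by omega), h, mul_assoc]

theorem aux_main {A : Type*} [CommRing A] (S : Subsemiring A) (y : A) (hy : y ∈ S) (n : ℕ) :
    ∃ R ∈ S, ∏ k ∈ Finset.Icc 1 n, (1 + (k : A) * y) -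
      ∏ k ∈ Finset.Icc 1 (n + 1), (∑ j ∈ Finset.range k, y ^ j) = (1 - y ^ 2) * R := by
  induction n with
  | zero => exact ⟨0, S.zero_mem, by simp⟩
  | succ n ih =>
    obtain ⟨R, hR, h⟩ := ih
    rw [Finset.prod_Icc_succ_top (by omega), Finset.prod_Icc_succ_top (b := n + 1) (by omega)]
    have hc : 1 + ((n + 1 : ℕ) : A) * y ∈ S :=
      S.add_mem S.one_mem (S.mul_mem (natCast_mem S _) hy)
    rcases Nat.eq_zero_or_pos n with rfl | hpos
    · exact ⟨0, S.zero_mem, by simp [Finset.sum_range_succ]⟩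
    · obtain ⟨U, hU, h1⟩ := aux_R S y hy (n + 1)
      obtain ⟨V, hV, h2⟩ := aux_Q S y hy (n + 1) (by omega)
      refine ⟨(1 + ((n + 1 : ℕ) : A) * y) * R + U * V,
        S.add_mem (S.mul_mem hc hR) (S.mul_mem hU hV), ?_⟩
      rw [h2] at h ⊢
      linear_combination (1 + ((n + 1 : ℕ) : A) * y) * h + (1 + y) * V * h1

/-- For every `n ≥ 1` there is a polynomial `ψ_n(t) ∈ ℤ[t]` with non-negative
coefficients such that
`∏_{k=1}^{n-1} (1 + k t²) - ∏_{k=1}^{n} (1 + t² + ⋯ + t^{2(k-1)}) = (1 - t⁴) ψ_n(t)`. -/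
theorem phi_eq_one_sub_t4_mul_psi (n : ℕ) (hn : 1 ≤ n) :
    ∃ ψ : Polynomial ℤ, (∀ i, 0 ≤ ψ.coeff i) ∧
      ((∏ k ∈ Finset.Icc 1 (n - 1), (1 + (k : Polynomial ℤ) * X ^ 2)) -
          ∏ k ∈ Finset.Icc 1 n, (∑ j ∈ Finset.range k, (X : Polynomial ℤ) ^ (2 * j)))
        = (1 - X ^ 4) * ψ := by
  obtain ⟨m, rfl⟩ : ∃ m, n = m + 1 := ⟨n - 1, by omega⟩
  obtain ⟨R, ⟨r, hr⟩, h⟩ := aux_main (Polynomial.mapRingHom (Nat.castRingHom ℤ)).rangeS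
    (X ^ 2 : Polynomial ℤ) ⟨X ^ 2, by simp⟩ m
  refine ⟨R, fun i => ?_, ?_⟩
  · rw [← hr]
    simp
  · simp only [pow_mul, Nat.add_sub_cancel]
    rw [h]
    ring
end

section
/- For every natural number n, the topological space C_n(ℝ) = {x : Fin n → ℝ | x is injective}, with the subspace topology from ℝⁿ, has exactly n! connected components. -/
def permPt {n : ℕ} (σ : Equiv.Perm (Fin n)) : {x : Fin n → ℝ // Function.Injective x} :=
  ⟨fun i => ((σ i : ℕ) : ℝ), fun i j h => by
    apply σ.injective
    apply Fin.ext
    exact Nat.cast_injective (R := ℝ) h⟩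

lemma lt_of_component_eq {n : ℕ} {x y : {x : Fin n → ℝ // Function.Injective x}}
    (h : (x : ConnectedComponents {x : Fin n → ℝ // Function.Injective x}) = y)
    {i j : Fin n} (hx : x.1 i < x.1 j) : y.1 i < y.1 j := by
  have hij : i ≠ j := by rintro rfl; exact lt_irrefl _ hx
  have hci : Continuous (fun z : {x : Fin n → ℝ // Function.Injective x} => z.1 i) :=
    (continuous_apply i).comp continuous_subtype_val
  have hcj : Continuous (fun z : {x : Fin n → ℝ // Function.Injective x} => z.1 j) :=
    (continuous_apply j).comp continuous_subtype_val
  have hcl : IsClopen {z : {x : Fin n → ℝ // Function.Injective x} | z.1 i < z.1 j} := by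
    refine ⟨?_, isOpen_lt hci hcj⟩
    convert isClosed_le hci hcj using 1
    ext z
    simp only [Set.mem_setOf_eq]
    exact ⟨fun h => le_of_lt h, fun h => lt_of_le_of_ne h fun e => hij (z.2 e)⟩
  have := hcl.connectedComponent_subset (x := x) hx
  rw [ConnectedComponents.coe_eq_coe] at h
  rw [h] at this
  exact this mem_connectedComponent

lemma component_eq_of_lt {n : ℕ} {x y : {x : Fin n → ℝ // Function.Injective x}}
    (h : ∀ i j, x.1 i < x.1 j → y.1 i < y.1 j) :
    (x : ConnectedComponents {x : Fin n → ℝ // Function.Injective x}) = y := by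
  set S : Set (Fin n → ℝ) := {z | ∀ i j, x.1 i < x.1 j → z i < z j} with hS
  have hconv : Convex ℝ S := by
    intro a ha b hb s t hs ht hst i j hij
    have h1 := ha i j hij
    have h2 := hb i j hij
    simp only [Pi.add_apply, Pi.smul_apply, smul_eq_mul]
    rcases hs.eq_or_lt with rfl | hs'
    · have : t = 1 := by linarith
      subst this; linarith
    · have := mul_lt_mul_of_pos_left h1 hs'
      have := mul_le_mul_of_nonneg_left h2.le ht
      linarith
  have hsub : ∀ z ∈ S, Function.Injective z := by
    intro z hz i j e
    by_contra hne
    rcases lt_or_gt_of_ne (fun e' => hne (x.2 e') : x.1 i ≠ x.1 j) with h1 | h1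
    · exact (hz i j h1).ne e
    · exact (hz j i h1).ne' e
  have hpre : IsPreconnected
      ((Subtype.val : {x : Fin n → ℝ // Function.Injective x} → _) ⁻¹' S) := by
    have hind : Topology.IsInducing
        (Subtype.val : {x : Fin n → ℝ // Function.Injective x} → (Fin n → ℝ)) := ⟨rfl⟩
    rw [← hind.isPreconnected_image, Set.image_preimage_eq_of_subset]
    · exact hconv.isPreconnected
    · intro z hz
      exact ⟨⟨z, hsub z hz⟩, rfl⟩
  have hx : x ∈ (Subtype.val : {x : Fin n → ℝ // Function.Injective x} → _) ⁻¹' S :=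
    fun i j hij => hij
  have hy : y ∈ (Subtype.val : {x : Fin n → ℝ // Function.Injective x} → _) ⁻¹' S := h
  rw [ConnectedComponents.coe_eq_coe']
  exact hpre.subset_connectedComponent hy hx

/-- The ordered configuration space `C_n(ℝ) = {x : Fin n → ℝ | x injective}`
(with the subspace topology from `ℝⁿ`) has exactly `n!` connected components. -/
theorem card_connectedComponents_config_real (n : ℕ) :
    Nat.card (ConnectedComponents {x : Fin n → ℝ // Function.Injective x})
      = Nat.factorial n := by
  have hbij : Function.Bijective (fun σ : Equiv.Perm (Fin n) =>
      (permPt σ : ConnectedComponents {x : Fin n → ℝ // Function.Injective x})) := by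
    constructor
    · intro σ τ h
      have h1 : ∀ i j, σ i < σ j → τ i < τ j := by
        intro i j hij
        have h2 : (permPt σ).1 i < (permPt σ).1 j := by
          simpa [permPt] using hij
        simpa [permPt] using lt_of_component_eq h h2
      have hm : StrictMono (σ.symm.trans τ) := by
        intro a b hab
        apply h1
        simpa using hab
      have h3 : (StrictMono.orderIsoOfSurjective _ hm (σ.symm.trans τ).surjective) =
        OrderIso.refl (Fin n) := Subsingleton.elim _ _
      ext i
      have h4 := DFunLike.congr_fun h3 (σ i)
      simp at h4
      rw [h4]
    · intro c
      obtain ⟨x, rfl⟩ := ConnectedComponents.surjective_coe c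
      refine ⟨(Tuple.sort x.1).symm, ?_⟩
      refine (component_eq_of_lt ?_).symm
      intro i j hij
      have : (Tuple.sort x.1).symm i < (Tuple.sort x.1).symm j := by
        by_contra hle
        have := Tuple.monotone_sort x.1 (not_lt.mp hle)
        simp at this
        linarith
      simpa [permPt] using this
  rw [← Nat.card_eq_of_bijective _ hbij, Nat.card_eq_fintype_card, Fintype.card_perm,
    Fintype.card_fin]
end

section
/- Let K be a field, V an n-dimensional K-vector space, f : V → V a linear endomorphism with n distinct eigenvalues in K, and let r₁, …, r_t be positive integers with r₁ + ⋯ + r_t = n. Then the number of f-invariant partial flags of type (r₁, …, r_t), i.e., chains 0 = V₀ ≤ V₁ ≤ ⋯ ≤ V_t = V of subspaces with dim Vᵢ − dim Vᵢ₋₁ = rᵢ and f(Vᵢ) ⊆ Vᵢ for all i, is exactly the multinomial coefficient n!/(r₁!·r₂!⋯r_t!). -/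
open Module

theorem aux_perm {n t : ℕ} (g h : Fin n → Fin t)
    (H : ∀ i, Fintype.card {j // g j = i} = Fintype.card {j // h j = i}) :
    ∃ σ : Equiv.Perm (Fin n), h ∘ σ = g := by
  classical
  let e : ∀ i, {j // g j = i} ≃ {j // h j = i} := fun i => Fintype.equivOfCardEq (H i)
  refine ⟨(Equiv.sigmaFiberEquiv g).symm.trans
    ((Equiv.sigmaCongrRight e).trans (Equiv.sigmaFiberEquiv h)), ?_⟩
  funext j
  exact (e (g j) ⟨j, rfl⟩).2

theorem aux_count (n t : ℕ) (r : Fin t → ℕ) (hsum : ∑ i, r i = n) :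
    Nat.card {g : Fin n → Fin t // ∀ i, Fintype.card {j // g j = i} = r i}
      = Nat.factorial n / ∏ i, Nat.factorial (r i) := by
  classical
  have e0 : Fin n ≃ Σ i, Fin (r i) := Fintype.equivOfCardEq (by simp [hsum])
  let g0 : Fin n → Fin t := fun j => (e0 j).1
  have hg0 : ∀ i, Fintype.card {j // g0 j = i} = r i := by
    intro i
    rw [Fintype.card_congr ((e0.subtypeEquiv (q := fun x => x.1 = i) (fun a => Iff.rfl)).trans
      (Equiv.sigmaSubtype i))]
    simp
  let S : Finset (Fin n → Fin t) :=
    Finset.univ.filter fun g => ∀ i, Fintype.card {j // g j = i} = r i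
  have hmaps : ∀ σ ∈ (Finset.univ : Finset (Equiv.Perm (Fin n))), g0 ∘ σ ∈ S := by
    intro σ _
    simp only [S, Finset.mem_filter, Finset.mem_univ, true_and]
    intro i
    rw [← hg0 i]
    exact Fintype.card_congr (σ.subtypeEquiv (fun a => Iff.rfl))
  have key := Finset.card_eq_sum_card_fiberwise (f := fun σ : Equiv.Perm (Fin n) => g0 ∘ σ)
    (s := Finset.univ) (t := S) hmaps
  have hfib : ∀ g ∈ S, (Finset.univ.filter
      fun σ : Equiv.Perm (Fin n) => g0 ∘ σ = g).card = ∏ i, Nat.factorial (r i) := by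
    intro g hg
    simp only [S, Finset.mem_filter, Finset.mem_univ, true_and] at hg
    obtain ⟨σ0, hσ0⟩ := aux_perm g g0 (fun i => by rw [hg, hg0])
    have h1 := DomMulAct.stabilizer_card (f := g)
    simp only [hg] at h1
    rw [← h1, ← Fintype.card_subtype]
    refine Fintype.card_congr ((Equiv.mulLeft σ0⁻¹).subtypeEquiv ?_)
    intro σ
    have : g ∘ ((Equiv.mulLeft σ0⁻¹) σ) = g0 ∘ σ := by
      rw [← hσ0]; funext j; simp
    rw [this]
  rw [Finset.sum_congr rfl hfib] at key
  simp only [Finset.card_univ, Fintype.card_perm, Fintype.card_fin, Finset.sum_const,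
    smul_eq_mul] at key
  rw [Nat.card_eq_fintype_card, Fintype.card_subtype, key]
  exact (Nat.mul_div_cancel _ (Finset.prod_pos fun i _ => Nat.factorial_pos _)).symm

theorem aux_inv {K V : Type*} [Field K] [AddCommGroup V] [Module K V] {n : ℕ}
    (f : V →ₗ[K] V) (μ : Fin n → K) (hμ : Function.Injective μ)
    (b : Basis (Fin n) K V) (hev : ∀ i, f (b i) = μ i • b i)
    (W : Submodule K V) (hW : ∀ x ∈ W, f x ∈ W) :
    W = Submodule.span K (b '' {j | b j ∈ W}) := by
  apply le_antisymm
  · intro x hx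
    rw [b.mem_span_image]
    intro i hi
    have hi' : b.repr x i ≠ 0 := by simpa using hi
    have hp : ∀ p : Polynomial K, Polynomial.aeval f p x ∈ W := by
      intro p
      induction p using Polynomial.induction_on' with
      | add p q hp hq => simpa using W.add_mem hp hq
      | monomial k a =>
        rw [Polynomial.aeval_monomial]
        have : ∀ k, (f ^ k) x ∈ W := by
          intro k
          induction k with
          | zero => simpa using hx
          | succ k ih => rw [pow_succ']; exact hW _ ih
        simpa [Module.algebraMap_end_apply] using W.smul_mem a (this k)
    let p : Polynomial K := ∏ j ∈ Finset.univ.erase i, (Polynomial.X - Polynomial.C (μ j))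
    have hpj : ∀ j, Polynomial.aeval f p (b j) = p.eval (μ j) • b j := fun j =>
      Module.End.aeval_apply_of_hasEigenvector
        ⟨Module.End.mem_eigenspace_iff.mpr (hev j), haveI := b.ne_zero; b.ne_zero j⟩
    have h0 : ∀ j, j ≠ i → p.eval (μ j) = 0 := by
      intro j hj
      rw [Polynomial.eval_prod]
      exact Finset.prod_eq_zero (i := j) (by simp [hj]) (by simp)
    have h1 : p.eval (μ i) ≠ 0 := by
      rw [Polynomial.eval_prod, Finset.prod_ne_zero_iff]
      intro j hj
      have : j ≠ i := by simpa using hj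
      simp only [Polynomial.eval_sub, Polynomial.eval_X, Polynomial.eval_C]
      exact sub_ne_zero.mpr fun h => this (hμ h).symm
    have hx2 : Polynomial.aeval f p x = (b.repr x i * p.eval (μ i)) • b i := by
      conv_lhs => rw [← b.sum_repr x]
      rw [map_sum, Finset.sum_eq_single i]
      · rw [map_smul, hpj, smul_smul]
      · intro j _ hj
        rw [map_smul, hpj, h0 j hj]; simp
      · simp
    have := hp p
    rw [hx2] at this
    exact (W.smul_mem_iff (mul_ne_zero hi' h1)).1 this
  · rw [Submodule.span_le]
    rintro _ ⟨j, hj, rfl⟩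
    exact hj

theorem aux_mem {K V : Type*} [Field K] [AddCommGroup V] [Module K V] {n : ℕ}
    (b : Basis (Fin n) K V) (s : Set (Fin n)) (j : Fin n) :
    b j ∈ Submodule.span K (b '' s) ↔ j ∈ s := by
  rw [b.mem_span_image]
  simp [Finsupp.support_single]

theorem aux_finrank {K V : Type*} [Field K] [AddCommGroup V] [Module K V] {n : ℕ}
    (b : Basis (Fin n) K V) (s : Finset (Fin n)) :
    Module.finrank K (Submodule.span K (b '' (s : Set (Fin n)))) = s.card := by
  classical
  have := finrank_span_eq_card (R := K) (b := fun j : s => b j)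
    (b.linearIndependent.comp _ Subtype.val_injective)
  rw [Fintype.card_coe] at this
  have hset : (b '' (s : Set (Fin n))) = Set.range (fun j : s => b j) := by
    ext x; simp
  rw [hset, this]

theorem aux_card {n t : ℕ} (g : Fin n → Fin t) (i : Fin t) :
    (Finset.univ.filter fun j => (g j).castSucc < i.succ).card
      = (Finset.univ.filter fun j => (g j).castSucc < i.castSucc).card
        + Fintype.card {j // g j = i} := by
  classical
  rw [Fintype.card_subtype, ← Finset.card_union_of_disjoint]
  · congr 1
    ext j
    simp only [Finset.mem_filter, Finset.mem_univ, true_and, Finset.mem_union, Fin.lt_def,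
      Fin.ext_iff, Fin.val_castSucc, Fin.val_succ]
    omega
  · rw [Finset.disjoint_filter]
    rintro j _ h rfl
    exact lt_irrefl _ h

/-- If `f` is a linear endomorphism of an `n`-dimensional `K`-vector space with
`n` distinct eigenvalues, and `r₁ + ⋯ + r_t = n` with each `rᵢ > 0`, then the
number of `f`-invariant partial flags of type `(r₁, …, r_t)` is exactly the
multinomial coefficient `n! / (r₁! ⋯ r_t!)`. -/
theorem card_invariant_partial_flags
    (K V : Type*) [Field K] [AddCommGroup V] [Module K V] [FiniteDimensional K V]
    (n : ℕ) (hdim : Module.finrank K V = n)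
    (f : V →ₗ[K] V)
    (μ : Fin n → K) (hμ : Function.Injective μ)
    (v : Fin n → V) (hv : ∀ i, v i ≠ 0) (hev : ∀ i, f (v i) = μ i • v i)
    (t : ℕ) (r : Fin t → ℕ) (hr : ∀ i, 0 < r i) (hsum : ∑ i, r i = n) :
    Nat.card {F : Fin (t + 1) → Submodule K V //
        Monotone F ∧ F 0 = ⊥ ∧ F (Fin.last t) = ⊤ ∧
        (∀ i : Fin t,
          Module.finrank K (F i.succ) = Module.finrank K (F i.castSucc) + r i) ∧
        (∀ i : Fin (t + 1), ∀ x ∈ F i, f x ∈ F i)}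
      = Nat.factorial n / ∏ i, Nat.factorial (r i) := by
  classical
  have hli : LinearIndependent K v :=
    Module.End.eigenvectors_linearIndependent' f μ hμ v
      (fun i => ⟨Module.End.mem_eigenspace_iff.mpr (hev i), hv i⟩)
  obtain ⟨b, hb⟩ : ∃ b : Basis (Fin n) K V, ⇑b = v :=
    ⟨basisOfLinearIndependentOfCardEqFinrank' v hli (by simp [hdim]), by simp⟩
  subst hb
  rw [← aux_count n t r hsum]
  symm
  let Φ : (Fin n → Fin t) → Fin (t + 1) → Submodule K V := fun g i =>
    Submodule.span K (b '' ((Finset.univ.filter fun j => (g j).castSucc < i : Finset _) : Set _))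
  have hmem : ∀ g i j, b j ∈ Φ g i ↔ (g j).castSucc < i := by
    intro g i j
    simp only [Φ]
    rw [aux_mem]; simp
  have hrank : ∀ g (i : Fin t), finrank K (Φ g i.succ) =
      finrank K (Φ g i.castSucc) + Fintype.card {j // g j = i} := by
    intro g i
    simp only [Φ]
    rw [aux_finrank, aux_finrank, aux_card]
  refine Nat.card_congr (Equiv.ofBijective (fun g => ⟨Φ g.1, ?_, ?_, ?_, ?_, ?_⟩) ⟨?_, ?_⟩)
  · intro i i' h
    apply Submodule.span_mono
    apply Set.image_mono
    intro j hj
    simp only [Finset.coe_filter, Finset.mem_univ, true_and, Set.mem_ofPred_eq] at hj ⊢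
    exact lt_of_lt_of_le hj h
  · simp [Φ]
  · simp [Φ, Fin.castSucc_lt_last]
  · intro i
    rw [hrank, g.2]
  · intro i
    have : Φ g.1 i ≤ (Φ g.1 i).comap f := by
      conv_lhs => simp only [Φ]
      rw [Submodule.span_le]
      rintro _ ⟨j, hj, rfl⟩
      change f (b j) ∈ Φ g.1 i
      rw [hev]
      apply Submodule.smul_mem
      rw [hmem]
      simpa using hj
    exact this
  · intro g g' h
    have h' : Φ g.1 = Φ g'.1 := congrArg Subtype.val h
    have hh : ∀ i j, (g.1 j).castSucc < i ↔ (g'.1 j).castSucc < i := by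
      intro i j
      rw [← hmem, ← hmem, h']
    apply Subtype.ext
    funext j
    have h1 := hh (g.1 j).succ j
    have h2 := hh (g'.1 j).succ j
    simp [Fin.lt_def] at h1 h2
    exact le_antisymm h2 h1
  · rintro ⟨F, hmono, h0, hlast, hrk, hinv⟩
    have hex : ∀ j, ∃ k : Fin t, ∀ i : Fin (t+1), k.castSucc < i ↔ b j ∈ F i := by
      intro j
      have hP : ∃ m : ℕ, ∃ h : m < t + 1, b j ∈ F ⟨m, h⟩ :=
        ⟨t, Nat.lt_succ_self t, by
          have : F ⟨t, Nat.lt_succ_self t⟩ = ⊤ := hlast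
          rw [this]; trivial⟩
      obtain ⟨hlt, hm⟩ := Nat.find_spec hP
      have hpos : Nat.find hP ≠ 0 := by
        intro h
        have : F ⟨Nat.find hP, hlt⟩ = ⊥ := by
          rw [← h0]; congr 1; exact Fin.ext h
        rw [this] at hm
        exact hv j (by simpa using hm)
      refine ⟨⟨Nat.find hP - 1, by omega⟩, fun i => ⟨fun h => ?_, fun h => ?_⟩⟩
      · have : Nat.find hP ≤ i.1 := by
          have h' : Nat.find hP - 1 < i.1 := h
          omega
        exact hmono (show (⟨Nat.find hP, hlt⟩ : Fin (t+1)) ≤ i from this) hm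
      · have := Nat.find_min' hP ⟨i.2, h⟩
        rw [Fin.lt_def]
        change Nat.find hP - 1 < i.1
        omega
    choose g hg using hex
    have hΦ : Φ g = F := by
      funext i
      rw [aux_inv f μ hμ b hev (F i) (hinv i)]
      simp only [Φ]
      congr 2
      ext j
      simp [hg]
    refine ⟨⟨g, fun i => ?_⟩, Subtype.ext hΦ⟩
    have h1 := hrank g i
    rw [hΦ, hrk i] at h1
    omega
end

section
/- Let r, s be natural numbers and n = r + s. The quotient of the topological space X = {(x, y) : (Fin r → ℝ) × (Fin s → ℝ) | x i ≠ y j for all i, j} by the action of Perm(Fin r) × Perm(Fin s) permuting the coordinates of x and of y has exactly n!/(r!·s!) = C(n, r) connected components. -/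
/-- The space of pairs of tuples `(x, y) ∈ ℝʳ × ℝˢ` with `xᵢ ≠ y_j` for all
`i, j` (with the subspace topology from the product). -/
abbrev TwoGroupConfig (r s : ℕ) : Type :=
  {p : (Fin r → ℝ) × (Fin s → ℝ) // ∀ i j, p.1 i ≠ p.2 j}

/-- The action of `Perm (Fin r) × Perm (Fin s)` permuting the coordinates of
`x` and of `y`. -/
instance twoGroupConfigSMul (r s : ℕ) :
    SMul (Equiv.Perm (Fin r) × Equiv.Perm (Fin s)) (TwoGroupConfig r s) where
  smul g p := ⟨(p.1.1 ∘ ⇑g.1⁻¹, p.1.2 ∘ ⇑g.2⁻¹), fun _ _ => p.2 _ _⟩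

instance twoGroupConfigMulAction (r s : ℕ) :
    MulAction (Equiv.Perm (Fin r) × Equiv.Perm (Fin s)) (TwoGroupConfig r s) where
  one_smul p := by
    apply Subtype.ext
    show (p.1.1 ∘ ⇑(1 : Equiv.Perm (Fin r))⁻¹, p.1.2 ∘ ⇑(1 : Equiv.Perm (Fin s))⁻¹) = p.1
    simp [Function.comp_def]
  mul_smul g h p := by
    apply Subtype.ext
    show (p.1.1 ∘ ⇑(g.1 * h.1)⁻¹, p.1.2 ∘ ⇑(g.2 * h.2)⁻¹)
      = ((p.1.1 ∘ ⇑h.1⁻¹) ∘ ⇑g.1⁻¹, (p.1.2 ∘ ⇑h.2⁻¹) ∘ ⇑g.2⁻¹)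
    simp [Function.comp_def]

/-- The unordered two-group configuration space `C_{r,s}(ℝ)`: the quotient of
`TwoGroupConfig r s` by the permutation action of `Σ_r × Σ_s`, with the
quotient topology. -/
abbrev TwoGroupConfigQuot (r s : ℕ) : Type :=
  Quotient (MulAction.orbitRel (Equiv.Perm (Fin r) × Equiv.Perm (Fin s)) (TwoGroupConfig r s))

namespace TGC

open Finset

/-- Number of `y`'s below `x i`. -/
noncomputable def cnt {r s : ℕ} (p : TwoGroupConfig r s) (i : Fin r) : Fin (s + 1) :=
  ⟨(univ.filter (fun j : Fin s => p.1.2 j < p.1.1 i)).card,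
    Nat.lt_succ_of_le ((card_le_univ _).trans (by simp))⟩

noncomputable def inv {r s : ℕ} (p : TwoGroupConfig r s) : Sym (Fin (s + 1)) r :=
  ⟨univ.val.map (cnt p), by simp⟩

lemma smul_fst {r s : ℕ} (g : Equiv.Perm (Fin r) × Equiv.Perm (Fin s))
    (p : TwoGroupConfig r s) (i : Fin r) : (g • p).1.1 i = p.1.1 (g.1⁻¹ i) := rfl

lemma smul_snd {r s : ℕ} (g : Equiv.Perm (Fin r) × Equiv.Perm (Fin s))
    (p : TwoGroupConfig r s) (i : Fin s) : (g • p).1.2 i = p.1.2 (g.2⁻¹ i) := rfl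

lemma cnt_smul {r s : ℕ} (g : Equiv.Perm (Fin r) × Equiv.Perm (Fin s))
    (p : TwoGroupConfig r s) (i : Fin r) : cnt (g • p) i = cnt p (g.1⁻¹ i) := by
  apply Fin.ext
  simp only [cnt, smul_fst, smul_snd]
  apply Finset.card_bij (fun j _ => g.2⁻¹ j)
  · intro a ha; simpa using ha
  · intro a _ b _ h; exact (g.2⁻¹).injective h
  · intro b hb
    exact ⟨g.2 b, by simpa using hb, by simp⟩

lemma inv_smul {r s : ℕ} (g : Equiv.Perm (Fin r) × Equiv.Perm (Fin s))
    (p : TwoGroupConfig r s) : inv (g • p) = inv p := by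
  apply Subtype.ext
  show univ.val.map (cnt (g • p)) = univ.val.map (cnt p)
  have : cnt (g • p) = cnt p ∘ ⇑g.1⁻¹ := funext (cnt_smul g p)
  rw [this, ← Multiset.map_map]
  congr 1
  have := Finset.map_univ_equiv (g.1⁻¹)
  exact congrArg Finset.val this

lemma isLocallyConstant_inv (r s : ℕ) :
    IsLocallyConstant (inv : TwoGroupConfig r s → Sym (Fin (s + 1)) r) := by
  have hb : Continuous (fun (p : TwoGroupConfig r s) (i : Fin r) (j : Fin s) =>
      decide (p.1.2 j < p.1.1 i)) := by
    refine continuous_pi fun i => continuous_pi fun j => ?_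
    have hx : Continuous fun p : TwoGroupConfig r s => p.1.1 i := by fun_prop
    have hy : Continuous fun p : TwoGroupConfig r s => p.1.2 j := by fun_prop
    refine continuous_discrete_rng.2 fun b => ?_
    cases b
    · have : (fun p : TwoGroupConfig r s => decide (p.1.2 j < p.1.1 i)) ⁻¹' {false}
          = {p | p.1.1 i < p.1.2 j} := by
        ext p
        simp only [Set.mem_preimage, Set.mem_singleton_iff, decide_eq_false_iff_not, not_lt,
          Set.mem_setOf_eq]
        exact ⟨fun h => lt_of_le_of_ne h (p.2 i j), le_of_lt⟩
      rw [this]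
      exact isOpen_lt hx hy
    · have : (fun p : TwoGroupConfig r s => decide (p.1.2 j < p.1.1 i)) ⁻¹' {true}
          = {p | p.1.2 j < p.1.1 i} := by
        ext p
        simp
      rw [this]
      exact isOpen_lt hy hx
  have h := (IsLocallyConstant.iff_continuous _).2 hb
  let G := (fun b : Fin r → Fin s → Bool =>
    (⟨univ.val.map (fun i => (⟨(univ.filter (fun j : Fin s => b i j = true)).card,
    Nat.lt_succ_of_le ((card_le_univ _).trans (by simp))⟩ : Fin (s + 1))), by simp⟩ :
      Sym (Fin (s + 1)) r))
  have := h.comp G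
  have e : (inv : TwoGroupConfig r s → Sym (Fin (s + 1)) r) = G ∘ (fun p i j =>
      decide (p.1.2 j < p.1.1 i)) := by
    funext p
    apply Subtype.ext
    simp only [inv, Function.comp_apply, G]
    refine Multiset.map_congr rfl fun i _ => ?_
    apply Fin.ext
    simp only [cnt]
    congr 1
    ext j
    simp
  rw [e]
  exact this

abbrev mkq {r s : ℕ} (p : TwoGroupConfig r s) : ConnectedComponents (TwoGroupConfigQuot r s) :=
  ConnectedComponents.mk (Quotient.mk _ p)

lemma mkq_smul {r s : ℕ} (g : Equiv.Perm (Fin r) × Equiv.Perm (Fin s))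
    (p : TwoGroupConfig r s) : mkq (g • p) = mkq p := by
  have : (Quotient.mk _ (g • p) : TwoGroupConfigQuot r s) = Quotient.mk _ p :=
    Quotient.sound ⟨g, rfl⟩
  unfold mkq
  rw [this]

lemma mkq_eq_of_order {r s : ℕ} (p q : TwoGroupConfig r s)
    (h : ∀ i j, p.1.2 j < p.1.1 i ↔ q.1.2 j < q.1.1 i) : mkq p = mkq q := by
  let g : unitInterval → TwoGroupConfig r s := fun t =>
    ⟨(fun i => (1 - (t : ℝ)) * p.1.1 i + t * q.1.1 i,
      fun j => (1 - (t : ℝ)) * p.1.2 j + t * q.1.2 j), by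
      intro i j
      have h0 : 0 ≤ (t : ℝ) := t.2.1
      have h1 : 0 ≤ 1 - (t : ℝ) := sub_nonneg.2 t.2.2
      simp only
      rcases lt_or_gt_of_ne (p.2 i j) with hp | hp
      · have hq : q.1.1 i < q.1.2 j :=
          lt_of_le_of_ne (not_lt.1 fun hq => lt_asymm hp ((h i j).2 hq)) (q.2 i j)
        rcases h0.eq_or_lt with ht | ht
        · rw [← ht]; simpa using hp.ne
        · have := mul_lt_mul_of_pos_left hq ht
          have := mul_le_mul_of_nonneg_left hp.le h1
          intro _; linarith
      · have hq := (h i j).1 hp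
        rcases h0.eq_or_lt with ht | ht
        · rw [← ht]; simpa using hp.ne'
        · have := mul_lt_mul_of_pos_left hq ht
          have := mul_le_mul_of_nonneg_left hp.le h1
          intro _; linarith⟩
  have hg : Continuous g := by
    refine Continuous.subtype_mk ?_ _
    fun_prop
  have hc : Continuous (fun t => mkq (g t)) :=
    ConnectedComponents.continuous_coe.comp (continuous_quotient_mk'.comp hg)
  have hs := (isPreconnected_range hc).subsingleton
  have e := hs ⟨0, rfl⟩ ⟨1, rfl⟩
  have g0 : g 0 = p := by
    apply Subtype.ext; simp [g]
  have g1 : g 1 = q := by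
    apply Subtype.ext; simp [g]
  simpa only [g0, g1] using e

/-- If `y` is monotone the order is determined by the counts. -/
lemma lt_iff_cnt {r s : ℕ} (p : TwoGroupConfig r s) (hp : Monotone p.1.2) (i : Fin r)
    (j : Fin s) : p.1.2 j < p.1.1 i ↔ (j : ℕ) < cnt p i := by
  simp only [cnt]
  constructor
  · intro h
    have : Finset.Iic j ⊆ univ.filter (fun j : Fin s => p.1.2 j < p.1.1 i) := by
      intro k hk
      simp only [mem_filter, mem_univ, true_and]
      exact (hp (Finset.mem_Iic.1 hk)).trans_lt h
    have := card_le_card this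
    rw [Fin.card_Iic] at this
    omega
  · intro h
    by_contra hn
    have : univ.filter (fun j : Fin s => p.1.2 j < p.1.1 i) ⊆ Finset.Iio j := by
      intro k hk
      simp only [mem_filter, mem_univ, true_and] at hk
      rw [Finset.mem_Iio]
      by_contra hkj
      exact hn ((hp (not_lt.1 hkj)).trans_lt hk)
    have := card_le_card this
    rw [Fin.card_Iio] at this
    omega

lemma exists_mono {r s : ℕ} (p : TwoGroupConfig r s) :
    ∃ p' : TwoGroupConfig r s, Monotone p'.1.2 ∧ mkq p' = mkq p ∧ inv p' = inv p :=
  ⟨((1, (Tuple.sort p.1.2)⁻¹) : Equiv.Perm (Fin r) × Equiv.Perm (Fin s)) • p,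
    by
      have := Tuple.monotone_sort p.1.2
      intro a b hab
      simpa [smul_snd] using this hab, mkq_smul _ _, inv_smul _ _⟩

lemma mkq_eq_of_inv {r s : ℕ} (p q : TwoGroupConfig r s) (h : inv p = inv q) :
    mkq p = mkq q := by
  obtain ⟨p', hp, hp1, hp2⟩ := exists_mono p
  obtain ⟨q', hq, hq1, hq2⟩ := exists_mono q
  rw [← hp1, ← hq1]
  have h' : univ.val.map (cnt p') = univ.val.map (cnt q') :=
    congrArg Subtype.val (hp2.trans (h.trans hq2.symm))
  obtain ⟨σ, hσ⟩ : ∃ σ : Equiv.Perm (Fin r), cnt p' = cnt q' ∘ σ := by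
    have hc : ∀ c, Fintype.card {i // cnt p' i = c} = Fintype.card {i // cnt q' i = c} := by
      intro c
      have := congrArg (Multiset.count c) h'
      rw [Multiset.count_map, Multiset.count_map] at this
      rw [Fintype.card_subtype, Fintype.card_subtype]
      simp only [Finset.card, Finset.filter_val]
      simpa only [eq_comm] using this
    refine ⟨Equiv.ofFiberEquiv (f := cnt p') (g := cnt q')
      fun c => Fintype.equivOfCardEq (hc c), ?_⟩
    funext i
    exact (Equiv.ofFiberEquiv_map _ i).symm
  rw [← mkq_smul ((σ⁻¹, 1) : Equiv.Perm (Fin r) × Equiv.Perm (Fin s)) q']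
  apply mkq_eq_of_order
  intro i j
  rw [lt_iff_cnt p' hp, lt_iff_cnt, cnt_smul, hσ]
  · simp
  · intro a b hab
    simpa [smul_snd] using hq hab

lemma inv_surj (r s : ℕ) : Function.Surjective (inv : TwoGroupConfig r s → _) := by
  rintro ⟨m, hm⟩
  obtain ⟨b, hb⟩ : ∃ b : Fin r → Fin (s + 1), univ.val.map b = m := by
    subst hm
    induction m using Quotient.inductionOn with
    | h l =>
      refine ⟨l.get, ?_⟩
      exact (Fin.univ_val_map (n := l.length) l.get).trans
        (congrArg (fun l : List (Fin (s + 1)) => (l : Multiset (Fin (s + 1)))) (List.ofFn_get l))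
  have hlt : ∀ (i : Fin r) (j : Fin s), ((j : ℕ) : ℝ) < ((b i : ℕ) : ℝ) - 1 / 2 ↔ (j : ℕ) < b i := by
    intro i j
    constructor
    · intro h
      have : ((j : ℕ) : ℝ) < ((b i : ℕ) : ℝ) := by linarith
      exact_mod_cast this
    · intro h
      have : ((j : ℕ) : ℝ) + 1 ≤ ((b i : ℕ) : ℝ) := by exact_mod_cast h
      linarith
  refine ⟨⟨(fun i => ((b i : ℕ) : ℝ) - 1 / 2, fun j => ((j : ℕ) : ℝ)), ?_⟩, ?_⟩
  · intro i j h
    simp only at h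
    have : (2 * (b i : ℕ) : ℝ) = 2 * (j : ℕ) + 1 := by linarith
    have : 2 * (b i : ℕ) = 2 * (j : ℕ) + 1 := by exact_mod_cast this
    omega
  · apply Subtype.ext
    simp only [inv]
    rw [← hb]
    congr 1
    funext i
    apply Fin.ext
    simp only [cnt, hlt]
    rw [Fin.card_filter_val_lt]
    have := (b i).2
    omega

end TGC

/-- The configuration space `C_{r,s}(ℝ)` of two unordered groups of `r` and `s`
points on the real line (with coincidences allowed within each group, but no
point of one group equal to a point of the other) has exactly
`n!/(r!·s!) = C(n, r)` connected components, where `n = r + s`. -/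
theorem card_connectedComponents_twoGroupConfig (r s : ℕ) :
    Nat.card (ConnectedComponents (TwoGroupConfigQuot r s))
      = Nat.factorial (r + s) / (Nat.factorial r * Nat.factorial s) := by
  letI : TopologicalSpace (Sym (Fin (s + 1)) r) := ⊥
  haveI : DiscreteTopology (Sym (Fin (s + 1)) r) := ⟨rfl⟩
  let F : TwoGroupConfigQuot r s → Sym (Fin (s + 1)) r :=
    Quotient.lift TGC.inv (by
      rintro a b ⟨g, rfl⟩
      exact TGC.inv_smul g b)
  have hF : Continuous F := (TGC.isLocallyConstant_inv r s).continuous.quotient_lift _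
  have hbij : Function.Bijective hF.connectedComponentsLift := by
    constructor
    · intro a b
      obtain ⟨a, rfl⟩ := ConnectedComponents.surjective_coe a
      obtain ⟨b, rfl⟩ := ConnectedComponents.surjective_coe b
      induction a using Quotient.inductionOn with | h a => ?_
      induction b using Quotient.inductionOn with | h b => ?_
      intro h
      exact TGC.mkq_eq_of_inv a b h
    · intro m
      obtain ⟨p, hp⟩ := TGC.inv_surj r s m
      exact ⟨TGC.mkq p, hp⟩
  rw [Nat.card_congr (Equiv.ofBijective _ hbij), Nat.card_eq_fintype_card,
    Sym.card_sym_eq_choose, Fintype.card_fin, Nat.choose_eq_factorial_div_factorial (by omega)]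
  congr 2
  · congr 1; omega
  · congr 2; omega
end

section
/- Let r, s be natural numbers. Every connected component of the quotient of X = {(x, y) : (Fin r → ℝ) × (Fin s → ℝ) | x i ≠ y j for all i, j} by the permutation action of Perm(Fin r) × Perm(Fin s) is a contractible topological space. -/
theorem tgc_sort_continuous (n : ℕ) :
    Continuous (fun x : Fin n → ℝ => x ∘ Tuple.sort x) := by
  have hlf : LocallyFinite (fun σ : Equiv.Perm (Fin n) => {x : Fin n → ℝ | Monotone (x ∘ σ)}) :=
    locallyFinite_of_finite _
  refine hlf.continuous ?_ ?_ ?_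
  · ext x
    simp only [Set.mem_iUnion, Set.mem_univ, iff_true]
    exact ⟨Tuple.sort x, Tuple.monotone_sort x⟩
  · intro σ
    have : {x : Fin n → ℝ | Monotone (x ∘ σ)} =
        ⋂ (i : Fin n) (j : Fin n) (_ : i ≤ j), {x : Fin n → ℝ | x (σ i) ≤ x (σ j)} := by
      ext x; simp [Monotone]
    rw [this]
    refine isClosed_iInter fun i => isClosed_iInter fun j => isClosed_iInter fun _ => ?_
    exact isClosed_le (by fun_prop) (by fun_prop)
  · intro σ
    have hc : Continuous (fun x : Fin n → ℝ => x ∘ σ) := by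
      refine continuous_pi fun i => ?_
      exact continuous_apply (σ i)
    refine hc.continuousOn.congr ?_
    intro x hx
    exact (Tuple.comp_sort_eq_comp_iff_monotone.mpr hx).symm

/-- Sorting both groups. -/
noncomputable def tgcSort {r s : ℕ} : TwoGroupConfigQuot r s → (Fin r → ℝ) × (Fin s → ℝ) :=
  Quotient.lift (fun p : TwoGroupConfig r s =>
    (p.1.1 ∘ Tuple.sort p.1.1, p.1.2 ∘ Tuple.sort p.1.2)) (by
    rintro _ b ⟨g, rfl⟩
    have h1 : ∀ (n : ℕ) (x : Fin n → ℝ) (σ : Equiv.Perm (Fin n)),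
        (x ∘ σ) ∘ Tuple.sort (x ∘ σ) = x ∘ Tuple.sort x :=
      fun n x σ => Tuple.comp_perm_comp_sort_eq_comp_sort
    exact Prod.ext (h1 r b.1.1 g.1⁻¹) (h1 s b.1.2 g.2⁻¹))

theorem tgcSort_continuous {r s : ℕ} : Continuous (tgcSort (r := r) (s := s)) := by
  refine Continuous.quotient_lift ?_ _
  exact ((tgc_sort_continuous r).comp (continuous_fst.comp continuous_subtype_val)).prodMk
    ((tgc_sort_continuous s).comp (continuous_snd.comp continuous_subtype_val))

theorem tgcSort_mono {r s : ℕ} (q : TwoGroupConfigQuot r s) :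
    Monotone (tgcSort q).1 ∧ Monotone (tgcSort q).2 := by
  induction q using Quotient.inductionOn with
  | h p => exact ⟨Tuple.monotone_sort _, Tuple.monotone_sort _⟩

theorem tgcSort_ne {r s : ℕ} (q : TwoGroupConfigQuot r s) (i : Fin r) (j : Fin s) :
    (tgcSort q).1 i ≠ (tgcSort q).2 j := by
  induction q using Quotient.inductionOn with
  | h p => exact p.2 _ _

theorem tgc_mk_sort {r s : ℕ} (q : TwoGroupConfigQuot r s) :
    (Quotient.mk _ (⟨tgcSort q, tgcSort_ne q⟩ : TwoGroupConfig r s) : TwoGroupConfigQuot r s)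
      = q := by
  induction q using Quotient.inductionOn with
  | h p =>
    apply Quotient.sound
    refine ⟨((Tuple.sort p.1.1)⁻¹, (Tuple.sort p.1.2)⁻¹), ?_⟩
    apply Subtype.ext
    show (p.1.1 ∘ ⇑((Tuple.sort p.1.1)⁻¹)⁻¹, p.1.2 ∘ ⇑((Tuple.sort p.1.2)⁻¹)⁻¹) = _
    simp only [inv_inv]
    rfl

theorem tgc_sort_mk {r s : ℕ} (p : TwoGroupConfig r s) (h1 : Monotone p.1.1)
    (h2 : Monotone p.1.2) :
    tgcSort (Quotient.mk _ p : TwoGroupConfigQuot r s) = p.1 := by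
  have h : ∀ (n : ℕ) (x : Fin n → ℝ), Monotone x → x ∘ Tuple.sort x = x := by
    intro n x hx
    rw [Tuple.sort_eq_refl_iff_monotone.mpr hx]; rfl
  exact Prod.ext (h _ _ h1) (h _ _ h2)

/-- The sorted configurations with the same pattern as `e`. -/
def tgcCell {r s : ℕ} (e : (Fin r → ℝ) × (Fin s → ℝ)) : Set ((Fin r → ℝ) × (Fin s → ℝ)) :=
  {p | Monotone p.1 ∧ Monotone p.2 ∧ ∀ i j,
    (p.1 i < p.2 j ∧ e.1 i < e.2 j) ∨ (p.2 j < p.1 i ∧ e.2 j < e.1 i)}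

theorem tgcCell_convex {r s : ℕ} (e : (Fin r → ℝ) × (Fin s → ℝ)) : Convex ℝ (tgcCell e) := by
  rintro p ⟨p1, p2, p3⟩ q ⟨q1, q2, q3⟩ a b ha hb hab
  have key : ∀ u v u' v' : ℝ, u < v → u' < v' → a * u + b * u' < a * v + b * v' := by
    intro u v u' v' h h'
    rcases ha.eq_or_lt with h0 | h0
    · subst h0
      have : b = 1 := by linarith
      subst this; linarith
    · have := mul_lt_mul_of_pos_left h h0
      have := mul_le_mul_of_nonneg_left h'.le hb
      linarith
  refine ⟨?_, ?_, ?_⟩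
  · intro i j hij
    exact add_le_add (mul_le_mul_of_nonneg_left (p1 hij) ha) (mul_le_mul_of_nonneg_left (q1 hij) hb)
  · intro i j hij
    exact add_le_add (mul_le_mul_of_nonneg_left (p2 hij) ha) (mul_le_mul_of_nonneg_left (q2 hij) hb)
  · intro i j
    rcases p3 i j with ⟨h, h'⟩ | ⟨h, h'⟩ <;> rcases q3 i j with ⟨k, k'⟩ | ⟨k, k'⟩
    · exact Or.inl ⟨key _ _ _ _ h k, h'⟩
    · exact absurd h' k'.not_gt
    · exact absurd h' k'.not_gt
    · exact Or.inr ⟨key _ _ _ _ h k, h'⟩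

theorem tgcCell_ne {r s : ℕ} {e p : (Fin r → ℝ) × (Fin s → ℝ)} (h : p ∈ tgcCell e) (i : Fin r)
    (j : Fin s) : p.1 i ≠ p.2 j := by
  rcases h.2.2 i j with h | h
  · exact h.1.ne
  · exact h.1.ne'

theorem tgcCell_self {r s : ℕ} (q : TwoGroupConfigQuot r s) : tgcSort q ∈ tgcCell (tgcSort q) := by
  refine ⟨(tgcSort_mono q).1, (tgcSort_mono q).2, fun i j => ?_⟩
  rcases lt_or_gt_of_ne (tgcSort_ne q i j) with h | h
  · exact Or.inl ⟨h, h⟩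
  · exact Or.inr ⟨h, h⟩

/-- The class of a sorted configuration. -/
def tgcMk {r s : ℕ} {e : (Fin r → ℝ) × (Fin s → ℝ)} (p : tgcCell e) : TwoGroupConfigQuot r s :=
  Quotient.mk _ ⟨p.1, tgcCell_ne p.2⟩

theorem tgcMk_continuous {r s : ℕ} {e : (Fin r → ℝ) × (Fin s → ℝ)} :
    Continuous (tgcMk (e := e)) :=
  continuous_quotient_mk'.comp (continuous_subtype_val.subtype_mk _)

theorem tgcMk_mem {r s : ℕ} (q : TwoGroupConfigQuot r s) (p : tgcCell (tgcSort q)) :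
    tgcMk p ∈ connectedComponent q := by
  haveI : PreconnectedSpace (tgcCell (tgcSort q)) :=
    Subtype.preconnectedSpace (tgcCell_convex _).isPreconnected
  have h := isPreconnected_range (tgcMk_continuous (e := tgcSort q))
  exact h.subset_connectedComponent ⟨⟨tgcSort q, tgcCell_self q⟩, tgc_mk_sort q⟩ ⟨p, rfl⟩

theorem tgcSort_mem {r s : ℕ} (q c : TwoGroupConfigQuot r s) (hc : c ∈ connectedComponent q) :
    tgcSort c ∈ tgcCell (tgcSort q) := by
  refine ⟨(tgcSort_mono c).1, (tgcSort_mono c).2, fun i j => ?_⟩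
  have c1 : Continuous fun c : TwoGroupConfigQuot r s => (tgcSort c).1 i :=
    (continuous_apply i).comp (continuous_fst.comp tgcSort_continuous)
  have c2 : Continuous fun c : TwoGroupConfigQuot r s => (tgcSort c).2 j :=
    (continuous_apply j).comp (continuous_snd.comp tgcSort_continuous)
  have ho : IsClopen {c : TwoGroupConfigQuot r s | (tgcSort c).1 i < (tgcSort c).2 j} := by
    refine ⟨?_, isOpen_lt c1 c2⟩
    convert isClosed_le c1 c2 using 1
    ext c
    simp only [Set.mem_setOf_eq]
    exact ⟨le_of_lt, fun h => lt_of_le_of_ne h (tgcSort_ne c i j)⟩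
  have ho' : IsClopen {c : TwoGroupConfigQuot r s | (tgcSort c).2 j < (tgcSort c).1 i} := by
    refine ⟨?_, isOpen_lt c2 c1⟩
    convert isClosed_le c2 c1 using 1
    ext c
    simp only [Set.mem_setOf_eq]
    exact ⟨le_of_lt, fun h => lt_of_le_of_ne h (tgcSort_ne c i j).symm⟩
  rcases lt_or_gt_of_ne (tgcSort_ne q i j) with h | h
  · exact Or.inl ⟨ho.connectedComponent_subset h hc, h⟩
  · exact Or.inr ⟨ho'.connectedComponent_subset h hc, h⟩

/-- The component of `q` is homeomorphic to a convex cell. -/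
noncomputable def tgcHomeo {r s : ℕ} (q : TwoGroupConfigQuot r s) :
    connectedComponent q ≃ₜ tgcCell (tgcSort q) where
  toFun c := ⟨tgcSort c.1, tgcSort_mem q c.1 c.2⟩
  invFun p := ⟨tgcMk p, tgcMk_mem q p⟩
  left_inv c := Subtype.ext (tgc_mk_sort c.1)
  right_inv p := Subtype.ext (tgc_sort_mk ⟨p.1, tgcCell_ne p.2⟩ p.2.1 p.2.2.1)
  continuous_toFun := (tgcSort_continuous.comp continuous_subtype_val).subtype_mk _
  continuous_invFun := tgcMk_continuous.subtype_mk _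

/-- Every connected component of the two-group configuration space
`C_{r,s}(ℝ)` (the quotient of `{(x, y) : xᵢ ≠ y_j}` by `Σ_r × Σ_s`) is a
contractible topological space. -/
theorem contractible_components_twoGroupConfig (r s : ℕ)
    (q : TwoGroupConfigQuot r s) :
    ContractibleSpace (connectedComponent q) := by
  haveI : ContractibleSpace (tgcCell (tgcSort q)) :=
    (tgcCell_convex _).contractibleSpace ⟨_, tgcCell_self q⟩
  exact (tgcHomeo q).contractibleSpace
end
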